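/- Let p : ι → V where V is a module over ZMod 2, let H : D → Set ι, and let G be a simple graph on D × ι whose adjacency relation satisfies: whenever (i,j) and (i',j') are adjacent, i ≠ i' and (j = j' or (j ∈ H(i') and j' ∈ H(i))). Let Q be a finite clique of G and let P' be the image of Q under the second projection. Then for every (i,j) ∈ Q: (1) every j' ∈ P' with j' ≠ j satisfies j' ∈ H(i); and (2) p(j) = (Σ_{j' ∈ P'} p(j')) + (Σ_{j' ∈ P', j' ≠ j} p(j')). -/

import Mathlib

theorem stmt_4 {D ι V : Type*} [DecidableEq ι]
    [AddCommGroup V] [Module (ZMod 2) V] (p : ι → V)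
    (H : D → Set ι) (G : SimpleGraph (D × ι))
    (hG : ∀ v w : D × ι, G.Adj v w →
      v.1 ≠ w.1 ∧ (v.2 = w.2 ∨ (v.2 ∈ H w.1 ∧ w.2 ∈ H v.1)))
    (Q : Finset (D × ι)) (hclique : G.IsClique (↑Q : Set (D × ι))) :
    ∀ v ∈ Q,
      (∀ j' ∈ Q.image Prod.snd, j' ≠ v.2 → j' ∈ H v.1) ∧
      p v.2 = (∑ j' ∈ Q.image Prod.snd, p j') +
        ∑ j' ∈ (Q.image Prod.snd).filter (fun j' => j' ≠ v.2), p j' := by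
  intro v hv
  refine ⟨fun j' hj' hne => ?_, ?_⟩
  · obtain ⟨w, hw, rfl⟩ := Finset.mem_image.mp hj'
    have hvw : v ≠ w := fun h => hne (h ▸ rfl)
    obtain ⟨-, h | h⟩ := hG v w (hclique hv hw hvw)
    · exact absurd h.symm hne
    · exact h.2
  · rw [Finset.filter_ne', ← Finset.add_sum_erase _ p (Finset.mem_image_of_mem Prod.snd hv),
      add_assoc, ZModModule.add_self, add_zero]
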